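/- Let A ∈ ℝ^{n×n}, B ∈ ℝ^{n×m}, let Q ∈ ℝ^{n×n}, R ∈ ℝ^{m×m} be symmetric positive definite, let M ≥ 1, p ≥ 1 be integers, and set i := pM. Define A_j := A^j, B_j := ∑_{l=0}^{j−1} A^l B, Q_i := ∑_{j=0}^{i−1} A_jᵀ Q A_j, S_i := ∑_{j=1}^{i−1} A_jᵀ Q B_j, R_i := i·R + ∑_{j=1}^{i−1} B_jᵀ Q B_j, and let [[Q̃_i, S̃_i], [S̃_iᵀ, R̃_i]] := [[Q_i, S_i], [S_iᵀ, R_i]]⁻¹. Let X ∈ ℝ^{n×n} be symmetric positive definite and Y ∈ ℝ^{m×n} be such that the symmetric block matrix [[X, 0, 0, A_i X + B_i Y], [0, Q̃_i, S̃_i, X], [0, S̃_iᵀ, R̃_i, Y], [(A_i X + B_i Y)ᵀ, X, Yᵀ, X]] is positive semidefinite. Then, with P_f := X⁻¹ and K_f := Y X⁻¹, for every x ∈ ℝ^n, with x⁺ := (A_i + B_i K_f) x: x⁺ᵀ P_f x⁺ − xᵀ P_f x ≤ − ∑_{j=0}^{i−1} [ ((A_j + B_j K_f) x)ᵀ Q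 ((A_j + B_j K_f) x) + (K_f x)ᵀ R (K_f x) ]. -/

import Mathlib

open Matrix

/-- `B_j := ∑_{l=0}^{j−1} A^l B` (so `B_0 = 0`). -/
noncomputable def Bmat {n m : ℕ} (A : Matrix (Fin n) (Fin n) ℝ)
    (B : Matrix (Fin n) (Fin m) ℝ) (j : ℕ) : Matrix (Fin n) (Fin m) ℝ :=
  ∑ l ∈ Finset.range j, A ^ l * B

/-- `Q_i := ∑_{j=0}^{i−1} A_jᵀ Q A_j`. -/
noncomputable def Qmat {n : ℕ} (A Q : Matrix (Fin n) (Fin n) ℝ) (i : ℕ) :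
    Matrix (Fin n) (Fin n) ℝ :=
  ∑ j ∈ Finset.range i, (A ^ j)ᵀ * Q * A ^ j

/-- `S_i := ∑_{j=1}^{i−1} A_jᵀ Q B_j`. -/
noncomputable def Smat {n m : ℕ} (A : Matrix (Fin n) (Fin n) ℝ)
    (B : Matrix (Fin n) (Fin m) ℝ) (Q : Matrix (Fin n) (Fin n) ℝ) (i : ℕ) :
    Matrix (Fin n) (Fin m) ℝ :=
  ∑ j ∈ Finset.Ico 1 i, (A ^ j)ᵀ * Q * Bmat A B j

/-- `R_i := i·R + ∑_{j=1}^{i−1} B_jᵀ Q B_j`. -/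
noncomputable def Rmat {n m : ℕ} (A : Matrix (Fin n) (Fin n) ℝ)
    (B : Matrix (Fin n) (Fin m) ℝ) (Q : Matrix (Fin n) (Fin n) ℝ)
    (R : Matrix (Fin m) (Fin m) ℝ) (i : ℕ) : Matrix (Fin m) (Fin m) ℝ :=
  i • R + ∑ j ∈ Finset.Ico 1 i, (Bmat A B j)ᵀ * Q * Bmat A B j

/-!
Holding the input makes the pair `(x, u)` evolve by the linear map `V = [[A, B], [0, 1]]`, so the
cost cumulated over `i` steps is the quadratic form `H = ∑_{j<i} (V^j)ᵀ diag(Q, R) V^j`. With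
`z = X⁻¹ x` and `w = (x, K_f x)`, testing the LMI on `(-X⁻¹ x⁺, -H w, z)` completes the square in
the block `diag(X, H⁻¹)` and leaves `x⁺ᵀ X⁻¹ x⁺ + wᵀ H w ≤ zᵀ X z = xᵀ X⁻¹ x`.
-/

lemma sum_Ico_one_eq_sum_range {G : Type*} [AddCommMonoid G] {f : ℕ → G} (hf : f 0 = 0) (i : ℕ) :
    ∑ j ∈ Finset.Ico 1 i, f j = ∑ j ∈ Finset.range i, f j := by
  obtain rfl | hi := i.eq_zero_or_pos
  · rfl
  · rw [Finset.sum_range_eq_add_Ico f hi, hf, zero_add]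

lemma posDef_fromBlocks_diagonal {k l R : Type*} [Finite k] [Finite l] [Ring R] [PartialOrder R]
    [AddLeftMono R] [StarRing R] {P : Matrix k k R} {D : Matrix l l R}
    (hP : P.PosDef) (hD : D.PosDef) : (fromBlocks P 0 0 D).PosDef := by
  have := Fintype.ofFinite k
  have := Fintype.ofFinite l
  refine .of_dotProduct_mulVec_pos (.fromBlocks hP.isHermitian (by simp) hD.isHermitian)
    fun v hv => ?_
  obtain ⟨a, b, rfl⟩ : ∃ a b, v = Sum.elim a b := ⟨_, _, (Sum.elim_comp_inl_inr v).symm⟩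
  have hquad : star (Sum.elim a b) ⬝ᵥ (fromBlocks P 0 0 D *ᵥ Sum.elim a b) =
      star a ⬝ᵥ (P *ᵥ a) + star b ⬝ᵥ (D *ᵥ b) := by
    simp [fromBlocks_mulVec, Function.star_sumElim]
  rw [hquad]
  obtain rfl | ha := eq_or_ne a 0
  · have hb : b ≠ 0 := by rintro rfl; simp at hv
    simpa using hD.dotProduct_mulVec_pos hb
  · exact add_pos_of_pos_of_nonneg (hP.dotProduct_mulVec_pos ha)
      (hD.posSemidef.dotProduct_mulVec_nonneg b)

-- When `P` is invertible, `v = P⁻¹ C z` and this is the Schur complement inequality.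
lemma dotProduct_mulVec_le_of_posSemidef_fromBlocks {k l R : Type*} [Fintype k] [Fintype l]
    [Ring R] [PartialOrder R] [AddLeftMono R] [StarRing R]
    {P : Matrix k k R} {C : Matrix k l R} {D : Matrix l l R}
    (h : (fromBlocks P C Cᴴ D).PosSemidef) {v : k → R} {z : l → R} (hv : P *ᵥ v = C *ᵥ z) :
    star v ⬝ᵥ (C *ᵥ z) ≤ star z ⬝ᵥ (D *ᵥ z) := by
  have hP : P.IsHermitian := (isHermitian_fromBlocks_iff.1 h.isHermitian).1
  have hcross : star z ⬝ᵥ (Cᴴ *ᵥ v) = star v ⬝ᵥ (C *ᵥ z) := by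
    rw [dotProduct_mulVec, ← star_mulVec, ← hv, star_mulVec, hP.eq, ← dotProduct_mulVec]
  have hnonneg := h.dotProduct_mulVec_nonneg (Sum.elim (-v) z)
  simpa [fromBlocks_mulVec, Function.star_sumElim, mulVec_neg, hv, hcross] using hnonneg

lemma dotProduct_inv_add_le_of_lmi {k l m n : Type*} [Fintype k] [DecidableEq k] [Fintype l]
    [DecidableEq l] [Fintype m] [DecidableEq m] [Fintype n] {P : Matrix k k ℝ}
    {E : Matrix l l ℝ} {S : Matrix l m ℝ} {T : Matrix m m ℝ} {H : Matrix (l ⊕ m) (l ⊕ m) ℝ}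
    {F : Matrix k n ℝ} {Z : Matrix l n ℝ} {Y : Matrix m n ℝ} {D : Matrix n n ℝ}
    (hP : IsUnit P) (hH : fromBlocks E S Sᵀ T * H = 1)
    (hLMI : (fromBlocks (fromBlocks P 0 0 E) (fromBlocks 0 F S Z)
      (fromBlocks 0 Sᵀ Fᵀ Zᵀ) (fromBlocks T Y Yᵀ D)).PosSemidef) (z : n → ℝ) :
    (F *ᵥ z) ⬝ᵥ (P⁻¹ *ᵥ (F *ᵥ z)) +
        Sum.elim (Z *ᵥ z) (Y *ᵥ z) ⬝ᵥ (H *ᵥ Sum.elim (Z *ᵥ z) (Y *ᵥ z)) ≤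
      z ⬝ᵥ (D *ᵥ z) := by
  let C : Matrix (k ⊕ (l ⊕ m)) n ℝ := fromRows F (fromRows Z Y)
  have hregroup :
      (fromBlocks (fromBlocks P 0 0 (fromBlocks E S Sᵀ T)) C Cᴴ D).PosSemidef := by
    convert hLMI.submatrix
      ((Equiv.sumCongr (Equiv.sumAssoc k l m).symm (.refl n)).trans (Equiv.sumAssoc (k ⊕ l) m n))
    ext ((a | a | a) | a) ((b | b | b) | b) <;> rfl
  have hC : C *ᵥ z = Sum.elim (F *ᵥ z) (Sum.elim (Z *ᵥ z) (Y *ᵥ z)) := by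
    simp only [C, fromRows_mulVec]
  have hsolve : fromBlocks P 0 0 (fromBlocks E S Sᵀ T) *ᵥ
      Sum.elim (P⁻¹ *ᵥ (F *ᵥ z)) (H *ᵥ Sum.elim (Z *ᵥ z) (Y *ᵥ z)) = C *ᵥ z := by
    rw [hC, fromBlocks_mulVec, Sum.elim_comp_inl, Sum.elim_comp_inr, zero_mulVec, zero_mulVec,
      add_zero, zero_add, mulVec_mulVec _ P, mulVec_mulVec _ _ H, hH,
      mul_nonsing_inv _ ((isUnit_iff_isUnit_det P).1 hP), one_mulVec, one_mulVec]
  have hschur := dotProduct_mulVec_le_of_posSemidef_fromBlocks hregroup hsolve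
  rwa [hC, star_trivial, star_trivial, dotProduct_comm, sumElim_dotProduct_sumElim] at hschur

section HeldInput

variable {n m : ℕ} (A : Matrix (Fin n) (Fin n) ℝ) (B : Matrix (Fin n) (Fin m) ℝ)

/-- The one-step map `(x, u) ↦ (A x + B u, u)` of the plant with a held input. -/
def heldDynamics : Matrix (Fin n ⊕ Fin m) (Fin n ⊕ Fin m) ℝ :=
  fromBlocks A B 0 1

lemma heldDynamics_pow (j : ℕ) :
    heldDynamics A B ^ j = fromBlocks (A ^ j) (Bmat A B j) 0 1 := by
  induction j with
  | zero => simp [Bmat]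
  | succ j ih =>
    rw [pow_succ, ih, heldDynamics, fromBlocks_multiply]
    simp [Bmat, Finset.sum_range_succ, pow_succ, add_comm]

lemma heldDynamics_pow_mulVec (j : ℕ) (x : Fin n → ℝ) (u : Fin m → ℝ) :
    heldDynamics A B ^ j *ᵥ Sum.elim x u = Sum.elim (A ^ j *ᵥ x + Bmat A B j *ᵥ u) u := by
  simp [heldDynamics_pow, fromBlocks_mulVec]

end HeldInput

section CumulatedCost

variable {n m : ℕ} (A : Matrix (Fin n) (Fin n) ℝ) (B : Matrix (Fin n) (Fin m) ℝ)
  {Q : Matrix (Fin n) (Fin n) ℝ} {R : Matrix (Fin m) (Fin m) ℝ}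

/-- The matrix `[[Q_i, S_i], [S_iᵀ, R_i]]` of the stage cost cumulated over `i` steps, as a
quadratic form in the initial state and the held input. -/
noncomputable def cumulatedCost (Q : Matrix (Fin n) (Fin n) ℝ) (R : Matrix (Fin m) (Fin m) ℝ)
    (i : ℕ) : Matrix (Fin n ⊕ Fin m) (Fin n ⊕ Fin m) ℝ :=
  fromBlocks (Qmat A Q i) (Smat A B Q i) (Smat A B Q i)ᵀ (Rmat A B Q R i)

lemma cumulatedCost_eq_sum (hQ : Q.IsSymm) (R : Matrix (Fin m) (Fin m) ℝ) (i : ℕ) :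
    cumulatedCost A B Q R i = ∑ j ∈ Finset.range i,
      (heldDynamics A B ^ j)ᵀ * fromBlocks Q 0 0 R * heldDynamics A B ^ j := by
  have hB : Bmat A B 0 = 0 := by simp [Bmat]
  have hterm (j : ℕ) : (heldDynamics A B ^ j)ᵀ * fromBlocks Q 0 0 R * heldDynamics A B ^ j =
      fromBlocks ((A ^ j)ᵀ * Q * A ^ j) ((A ^ j)ᵀ * Q * Bmat A B j)
        ((A ^ j)ᵀ * Q * Bmat A B j)ᵀ (R + (Bmat A B j)ᵀ * Q * Bmat A B j) := by
    simp [heldDynamics_pow, fromBlocks_transpose, fromBlocks_multiply, hQ.eq, Matrix.mul_assoc,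
      add_comm R]
  rw [cumulatedCost, Qmat, Smat, Rmat, sum_Ico_one_eq_sum_range (by simp [hB]),
    sum_Ico_one_eq_sum_range (by simp [hB])]
  simp only [hterm]
  induction i with
  | zero => simp
  | succ i ih =>
    simp only [Finset.sum_range_succ, ← ih, fromBlocks_add, transpose_add, succ_nsmul,
      add_add_add_comm]

lemma posDef_cumulatedCost (hQ : Q.PosDef) (hR : R.PosDef) {i : ℕ} (hi : 0 < i) :
    (cumulatedCost A B Q R i).PosDef := by
  have hW : (fromBlocks Q 0 0 R).PosDef := posDef_fromBlocks_diagonal hQ hR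
  obtain ⟨k, rfl⟩ := Nat.exists_eq_add_one.2 hi
  rw [cumulatedCost_eq_sum A B (show Q.IsSymm from hQ.isHermitian), Finset.sum_range_succ']
  refine .posSemidef_add (posSemidef_sum _ fun j _ => ?_) (by simpa using hW)
  exact hW.posSemidef.conjTranspose_mul_mul_same _

lemma dotProduct_cumulatedCost_mulVec (hQ : Q.IsSymm) (R : Matrix (Fin m) (Fin m) ℝ) (i : ℕ)
    (x : Fin n → ℝ) (u : Fin m → ℝ) :
    Sum.elim x u ⬝ᵥ (cumulatedCost A B Q R i *ᵥ Sum.elim x u) =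
      ∑ j ∈ Finset.range i, ((A ^ j *ᵥ x + Bmat A B j *ᵥ u) ⬝ᵥ
        (Q *ᵥ (A ^ j *ᵥ x + Bmat A B j *ᵥ u)) + u ⬝ᵥ (R *ᵥ u)) := by
  rw [cumulatedCost_eq_sum A B hQ, sum_mulVec, dotProduct_sum]
  refine Finset.sum_congr rfl fun j _ => ?_
  rw [← mulVec_mulVec, ← mulVec_mulVec, dotProduct_transpose_mulVec, heldDynamics_pow_mulVec,
    dotProduct_comm]
  simp [fromBlocks_mulVec]

end CumulatedCost

theorem terminal_cost_decrease_general {n m : ℕ}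
    (A : Matrix (Fin n) (Fin n) ℝ) (B : Matrix (Fin n) (Fin m) ℝ)
    (Q : Matrix (Fin n) (Fin n) ℝ) (R : Matrix (Fin m) (Fin m) ℝ) (hQ : Q.IsSymm) (i : ℕ)
    (Qt : Matrix (Fin n) (Fin n) ℝ) (St : Matrix (Fin n) (Fin m) ℝ)
    (Rt : Matrix (Fin m) (Fin m) ℝ)
    (hinv : fromBlocks Qt St Stᵀ Rt * cumulatedCost A B Q R i = 1)
    (X : Matrix (Fin n) (Fin n) ℝ) (hX : X.PosDef) (Y : Matrix (Fin m) (Fin n) ℝ)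
    (hLMI : (fromBlocks
        (fromBlocks X 0 0 Qt)
        (fromBlocks 0 (A ^ i * X + Bmat A B i * Y) St X)
        (fromBlocks 0 Stᵀ (A ^ i * X + Bmat A B i * Y)ᵀ X)
        (fromBlocks Rt Y Yᵀ X)).PosSemidef) (x : Fin n → ℝ) :
    ((A ^ i + Bmat A B i * (Y * X⁻¹)) *ᵥ x) ⬝ᵥ
        (X⁻¹ *ᵥ ((A ^ i + Bmat A B i * (Y * X⁻¹)) *ᵥ x)) - x ⬝ᵥ (X⁻¹ *ᵥ x) ≤
      -∑ j ∈ Finset.range i,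
          (((A ^ j + Bmat A B j * (Y * X⁻¹)) *ᵥ x) ⬝ᵥ
              (Q *ᵥ ((A ^ j + Bmat A B j * (Y * X⁻¹)) *ᵥ x)) +
            ((Y * X⁻¹) *ᵥ x) ⬝ᵥ (R *ᵥ ((Y * X⁻¹) *ᵥ x))) := by
  have hXX : X * X⁻¹ = 1 := mul_nonsing_inv X ((isUnit_iff_isUnit_det X).1 hX.isUnit)
  have hXt : Xᵀ = X := hX.isHermitian
  have hstate : X *ᵥ (X⁻¹ *ᵥ x) = x := by rw [mulVec_mulVec, hXX, one_mulVec]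
  have hinput : Y *ᵥ (X⁻¹ *ᵥ x) = (Y * X⁻¹) *ᵥ x := mulVec_mulVec ..
  have hnext : (A ^ i * X + Bmat A B i * Y) *ᵥ (X⁻¹ *ᵥ x) =
      (A ^ i + Bmat A B i * (Y * X⁻¹)) *ᵥ x := by
    rw [mulVec_mulVec, Matrix.add_mul, Matrix.mul_assoc, Matrix.mul_assoc, hXX, Matrix.mul_one]
  have hdecrease := dotProduct_inv_add_le_of_lmi (F := A ^ i * X + Bmat A B i * Y) (Z := X)
    (Y := Y) (D := X) hX.isUnit hinv (by rwa [hXt]) (X⁻¹ *ᵥ x)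
  rw [hnext, hstate, hinput, dotProduct_cumulatedCost_mulVec A B hQ,
    dotProduct_comm _ x] at hdecrease
  simp only [mulVec_mulVec, ← add_mulVec] at hdecrease ⊢
  linarith

/-- **Terminal-cost decrease of Lemma 1.**
With `i := pM` (`M ≥ 1`, `p ≥ 1`), `Q, R ≻ 0`, and the inverse cumulated-cost blocks
`[[Q̃_i, S̃_i], [S̃_iᵀ, R̃_i]] = [[Q_i, S_i], [S_iᵀ, R_i]]⁻¹`: if `X ≻ 0` and `Y` satisfy the
4×4 block LMI, then with `P_f := X⁻¹`, `K_f := Y X⁻¹`, for every `x` and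
`x⁺ := (A_i + B_i K_f) x`,
`x⁺ᵀ P_f x⁺ − xᵀ P_f x ≤ −∑_{j<i} [((A_j + B_j K_f)x)ᵀ Q ((A_j + B_j K_f)x) + (K_f x)ᵀ R (K_f x)]`. -/
theorem terminal_cost_decrease {n m : ℕ}
    (A : Matrix (Fin n) (Fin n) ℝ) (B : Matrix (Fin n) (Fin m) ℝ)
    (Q : Matrix (Fin n) (Fin n) ℝ) (R : Matrix (Fin m) (Fin m) ℝ)
    (hQ : Q.PosDef) (hR : R.PosDef)
    (M p : ℕ) (hM : 1 ≤ M) (hp : 1 ≤ p) (i : ℕ) (hi : i = p * M)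
    (Qt : Matrix (Fin n) (Fin n) ℝ) (St : Matrix (Fin n) (Fin m) ℝ)
    (Rt : Matrix (Fin m) (Fin m) ℝ)
    (hinv : (Matrix.fromBlocks (Qmat A Q i) (Smat A B Q i) (Smat A B Q i)ᵀ
        (Rmat A B Q R i))⁻¹ = Matrix.fromBlocks Qt St Stᵀ Rt)
    (X : Matrix (Fin n) (Fin n) ℝ) (hX : X.PosDef) (Y : Matrix (Fin m) (Fin n) ℝ)
    (hLMI : (Matrix.fromBlocks
        (Matrix.fromBlocks X 0 0 Qt)
        (Matrix.fromBlocks 0 (A ^ i * X + Bmat A B i * Y) St X)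
        (Matrix.fromBlocks 0 Stᵀ (A ^ i * X + Bmat A B i * Y)ᵀ X)
        (Matrix.fromBlocks Rt Y Yᵀ X)).PosSemidef) :
    ∀ x : Fin n → ℝ,
      ((A ^ i + Bmat A B i * (Y * X⁻¹)) *ᵥ x) ⬝ᵥ
          (X⁻¹ *ᵥ ((A ^ i + Bmat A B i * (Y * X⁻¹)) *ᵥ x)) - x ⬝ᵥ (X⁻¹ *ᵥ x) ≤
        -∑ j ∈ Finset.range i,
            (((A ^ j + Bmat A B j * (Y * X⁻¹)) *ᵥ x) ⬝ᵥ
                (Q *ᵥ ((A ^ j + Bmat A B j * (Y * X⁻¹)) *ᵥ x)) +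
              ((Y * X⁻¹) *ᵥ x) ⬝ᵥ (R *ᵥ ((Y * X⁻¹) *ᵥ x))) := by
  have hH : (cumulatedCost A B Q R i).PosDef :=
    posDef_cumulatedCost A B hQ hR (by rw [hi]; exact Nat.mul_pos hp hM)
  exact terminal_cost_decrease_general A B Q R hQ.isHermitian i Qt St Rt
    (hinv ▸ nonsing_inv_mul _ ((isUnit_iff_isUnit_det _).1 hH.isUnit)) X hX Y hLMI
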